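/- There exists a constant C > 0 such that every ordered binary tree of size n ≥ 2 has a straight-line orthogonal order-preserving planar grid drawing of some width W and height H with W·H ≤ C·n·2^{√(2·log₂ n)}·√(log₂ n). -/

import Mathlib

/-!
Every tree on `n` vertices is drawn with at most `n` rows, since empty rows can be deleted
(`TreeDraw.exists_rank`), so it is enough to draw it in `O(2 ^ √(2 log₂ n) * √(log₂ n))` columns.

The width is controlled by a recursion (`TreeDraw.Wid.step`). If all trees with at most `m` vertices
can be drawn in width `w`, and all trees with at most `N ≥ m` vertices in width `F`, then all trees
with at most `N + m + 1` vertices can be drawn in width `max (2 * w + 3) (F + 1)`. To see this, walk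
down from the root along the heavy path as long as one of the two subtrees has at most `m` vertices.
When both have more, both have at most `N`. If the path only turns right, it is drawn as a vertical
line with the other subtrees to the west of it, in width `F + 1`. Otherwise the last two steps that
matter are a right and a left step or two left steps, and the lower end of the path can be placed
against the west or the east side of the strip, so that the large subtrees there use the whole width
of the strip (`TreeDraw.Sd.rl`, `TreeDraw.Sd.ll`, `TreeDraw.HBlk.rl`). These drawings have a gap of
arbitrary height into which the earlier vertices of the path are inserted, together with their small
subtrees, of width `w` on either side (`TreeDraw.Sd.addL`, `TreeDraw.Sd.addR`, `TreeDraw.Sd.root`);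
`TreeDraw.classify` says that these cases are exhaustive. All drawings of subtrees keep a free ray
from the root towards the parent (`TreeDraw.HBlk`, `TreeDraw.Spine`, `TreeDraw.Sd`).

Iterating with fixed `m`, size `(k + 1) * m` needs width at most `2 * w + 2 + k`. With
`k + 1 = 2 ^ (j + 1)` at stage `j`, the size becomes `2 ^ (j * (j + 1) / 2)` and the width
`2 ^ j * (2 * j + 5)` (`TreeDraw.wid_pow`), and `j = ⌈√(2 log₂ n)⌉` suffices
(`TreeDraw.exists_width`).

The drawings are built as trees with integer positions, where planarity and the cyclic order of the
edges are recorded recursively (`TreeDraw.DT.OK`). For the given graph one chooses the binary tree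
of its vertices (`TreeDraw.exists_bt`), reads off the positions, and translates the recursive
conditions into statements about segments and angles in the real plane
(`TreeDraw.drawing_of_data`).
-/

open SimpleGraph

/-- A straight-line planar drawing of a graph `G`: an injective map of vertices to points of
`ℝ²` such that no vertex lies in the interior of (or on) a non-incident edge segment, and any
two distinct edge segments intersect exactly in the images of their common endpoints. -/
def IsStraightLineDrawing {V : Type} (G : SimpleGraph V) (f : V → ℝ × ℝ) : Prop :=
  Function.Injective f ∧
  (∀ u v w : V, G.Adj u v → w ≠ u → w ≠ v → f w ∉ segment ℝ (f u) (f v)) ∧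
  (∀ u v u' v' : V, G.Adj u v → G.Adj u' v' → s(u, v) ≠ s(u', v') →
    segment ℝ (f u) (f v) ∩ segment ℝ (f u') (f v') =
      f '' {w | (w = u ∨ w = v) ∧ (w = u' ∨ w = v')})

/-- A grid drawing of width `W` and height `H`: a straight-line planar drawing with all
vertices on integer grid points of `{1, …, W} × {1, …, H}`. -/
def IsGridDrawing {V : Type} (G : SimpleGraph V) (f : V → ℝ × ℝ) (W H : ℕ) : Prop :=
  IsStraightLineDrawing G f ∧
  ∀ x : V, ∃ i j : ℤ, 1 ≤ i ∧ i ≤ (W : ℤ) ∧ 1 ≤ j ∧ j ≤ (H : ℤ) ∧ f x = ((i : ℝ), (j : ℝ))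

/-- In a tree with distinguished root `r`, `u` is the parent of `v` iff `u` is a neighbor of
`v` lying on the path from `v` to `r` (equivalently, one step closer to the root). -/
def IsParent {V : Type} (G : SimpleGraph V) (r u v : V) : Prop :=
  G.Adj u v ∧ G.dist r u + 1 = G.dist r v

/-- A drawing is upward (w.r.t. root `r`) if every parent is drawn at a `y`-coordinate
greater than or equal to that of each of its children. -/
def IsUpward {V : Type} (G : SimpleGraph V) (r : V) (f : V → ℝ × ℝ) : Prop :=
  ∀ u v : V, IsParent G r u v → (f v).2 ≤ (f u).2

/-- A drawing is orthogonal if every edge is drawn horizontally or vertically. -/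
def IsOrthogonal {V : Type} (G : SimpleGraph V) (f : V → ℝ × ℝ) : Prop :=
  ∀ u v : V, G.Adj u v → (f u).1 = (f v).1 ∨ (f u).2 = (f v).2

/-- `logStar n`: the least `j` such that the `j`-fold iterated base-2 logarithm of `n`
is at most `1`. -/
noncomputable def logStar (n : ℕ) : ℕ := sInf {j : ℕ | (Real.logb 2)^[j] (n : ℝ) ≤ 1}

/-- The counterclockwise angle, in `[0, 2π)`, by which the direction `d₀` must be rotated
to reach the direction `d`. -/
noncomputable def ccwAngle (d₀ d : ℝ × ℝ) : ℝ :=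
  if Complex.arg ((⟨d.1, d.2⟩ : ℂ) / (⟨d₀.1, d₀.2⟩ : ℂ)) < 0 then
    Complex.arg ((⟨d.1, d.2⟩ : ℂ) / (⟨d₀.1, d₀.2⟩ : ℂ)) + 2 * Real.pi
  else Complex.arg ((⟨d.1, d.2⟩ : ℂ) / (⟨d₀.1, d₀.2⟩ : ℂ))

/-- A drawing of an ordered binary tree (with left/right designation `lab`, `false` = left,
`true` = right) is order-preserving: around any vertex `v` with a parent `p`, a left child
`l`, and a right child `rc`, rotating counterclockwise from the direction of `f p - f v`,
the direction of `f l - f v` is encountered strictly before that of `f rc - f v`. -/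
def IsOrderPreserving {V : Type} (G : SimpleGraph V) (r : V) (lab : V → Bool)
    (f : V → ℝ × ℝ) : Prop :=
  ∀ p v l rc : V, IsParent G r p v →
    IsParent G r v l → lab l = false →
    IsParent G r v rc → lab rc = true →
    ccwAngle (f p - f v) (f l - f v) < ccwAngle (f p - f v) (f rc - f v)

namespace TreeDraw

/-! ### Drawings of ordered binary trees on the integer grid -/

/-- Ordered binary trees with vertices labelled by `α`. -/
inductive BT (α : Type) : Type
  | nil : BT α
  | node (a : α) (l r : BT α) : BT α

/-- Ordered binary trees in which every vertex carries, besides its label, a grid position. -/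
inductive DT (α : Type) : Type
  | nil : DT α
  | node (a : α) (x y : ℤ) (l r : DT α) : DT α

/-- The four axis directions. -/
inductive Dir : Type
  | E | N | W | S

namespace Dir

/-- The opposite direction. -/
def opp : Dir → Dir
  | E => W | N => S | W => E | S => N

/-- Reflection in a vertical line. -/
def flipX : Dir → Dir
  | E => W | N => N | W => E | S => S

/-- Reflection in a horizontal line. -/
def flipY : Dir → Dir
  | E => E | N => S | W => W | S => N

/-- The number of counterclockwise quarter turns from east. -/
def ix : Dir → ℕ
  | E => 0 | N => 1 | W => 2 | S => 3

/-- The number of counterclockwise quarter turns from `d₀` to `d`. -/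
def turn (d₀ d : Dir) : ℕ := (d.ix + 4 - d₀.ix) % 4

/-- Rotating counterclockwise from `d`, one meets `dl` and then `dr`, all three distinct. -/
def Ccw (d dl dr : Dir) : Prop := 0 < turn d dl ∧ turn d dl < turn d dr

instance (d dl dr : Dir) : Decidable (Ccw d dl dr) :=
  inferInstanceAs (Decidable (_ ∧ _))

end Dir

open Dir

/-- The point `q` lies strictly in direction `d` from the point `p`. -/
def At {R : Type} [LT R] : Dir → R → R → R → R → Prop
  | E, px, py, qx, qy => px < qx ∧ qy = py
  | N, px, py, qx, qy => py < qy ∧ qx = px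
  | W, px, py, qx, qy => qx < px ∧ qy = py
  | S, px, py, qx, qy => qy < py ∧ qx = px

/-- The point `z` lies in the bounding box of `p` and `q`; for axis-aligned `p`, `q` this is the
set of grid points of the segment from `p` to `q`. -/
def Box (px py qx qy zx zy : ℤ) : Prop :=
  (px ≤ zx ∧ zx ≤ qx ∨ qx ≤ zx ∧ zx ≤ px) ∧ (py ≤ zy ∧ zy ≤ qy ∨ qy ≤ zy ∧ zy ≤ py)

variable {α : Type}

namespace BT

/-- The number of vertices. -/
def size : BT α → ℕ
  | nil => 0
  | node _ l r => l.size + r.size + 1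

/-- The tree with left and right exchanged everywhere. -/
def mirror : BT α → BT α
  | nil => nil
  | node a l r => node a r.mirror l.mirror

@[simp] theorem mirror_mirror (t : BT α) : t.mirror.mirror = t := by
  induction t with
  | nil => rfl
  | node a l r hl hr => simp [mirror, hl, hr]

@[simp] theorem size_mirror (t : BT α) : t.mirror.size = t.size := by
  induction t with
  | nil => rfl
  | node a l r hl hr => simp [mirror, size, hl, hr]; omega

end BT

namespace DT

/-- Forget the positions. -/
def shape : DT α → BT α
  | nil => .nil
  | node a _ _ l r => .node a l.shape r.shape

/-- The root, if there is one, is placed at `(x, y)`. -/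
def RootAt (x y : ℤ) : DT α → Prop
  | nil => True
  | node _ px py _ _ => px = x ∧ py = y

/-- The grid points of the edge joining `(x, y)` to the root; empty for the empty tree. -/
def Arm (x y : ℤ) : DT α → ℤ → ℤ → Prop
  | nil, _, _ => False
  | node _ qx qy _ _, zx, zy => Box x y qx qy zx zy

/-- The grid points covered by the vertices and edges of the drawing. -/
def Cov : DT α → ℤ → ℤ → Prop
  | nil, _, _ => False
  | node _ x y l r, zx, zy =>
    (zx = x ∧ zy = y) ∨ l.Cov zx zy ∨ r.Cov zx zy ∨ l.Arm x y zx zy ∨ r.Arm x y zx zy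

/-- The root, if there is one, lies in direction `d` from `(x, y)`, and the edge joining them
meets the drawing only in the root. -/
def Link (d : Dir) (x y : ℤ) : DT α → Prop
  | nil => True
  | node a qx qy l r => At d x y qx qy ∧
      ∀ zx zy, (node a qx qy l r).Cov zx zy → Box x y qx qy zx zy → zx = qx ∧ zy = qy

/-- The drawing is orthogonal, planar and order-preserving, where `d` is the direction in which
the parent of the root is thought to lie. -/
def OK : Dir → DT α → Prop
  | _, nil => True
  | d, node _ x y l r => ∃ dl dr, Ccw d dl dr ∧ l.Link dl x y ∧ r.Link dr x y ∧
      l.OK dl.opp ∧ r.OK dr.opp ∧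
      (∀ zx zy, l.Cov zx zy → r.Cov zx zy → False) ∧
      (∀ zx zy, l.Cov zx zy → r.Arm x y zx zy → False) ∧
      (∀ zx zy, r.Cov zx zy → l.Arm x y zx zy → False)

/-- Reflection `x ↦ c - x` of the plane, which exchanges left and right children. -/
def reflX (c : ℤ) : DT α → DT α
  | nil => nil
  | node a x y l r => node a (c - x) y (r.reflX c) (l.reflX c)

/-- Reflection `y ↦ c - y` of the plane, which exchanges left and right children. -/
def reflY (c : ℤ) : DT α → DT α
  | nil => nil
  | node a x y l r => node a x (c - y) (r.reflY c) (l.reflY c)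

theorem shape_reflX (c : ℤ) (D : DT α) : (D.reflX c).shape = D.shape.mirror := by
  induction D with
  | nil => rfl
  | node a x y l r hl hr => simp [reflX, shape, BT.mirror, hl, hr]

theorem shape_reflY (c : ℤ) (D : DT α) : (D.reflY c).shape = D.shape.mirror := by
  induction D with
  | nil => rfl
  | node a x y l r hl hr => simp [reflY, shape, BT.mirror, hl, hr]

theorem arm_reflX (c x y zx zy : ℤ) (D : DT α) :
    (D.reflX c).Arm (c - x) y zx zy ↔ D.Arm x y (c - zx) zy := by
  cases D with
  | nil => simp [reflX, Arm]
  | node a qx qy l r => simp only [reflX, Arm, Box]; omega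

theorem arm_reflY (c x y zx zy : ℤ) (D : DT α) :
    (D.reflY c).Arm x (c - y) zx zy ↔ D.Arm x y zx (c - zy) := by
  cases D with
  | nil => simp [reflY, Arm]
  | node a qx qy l r => simp only [reflY, Arm, Box]; omega

theorem cov_reflX (c : ℤ) (D : DT α) : ∀ zx zy : ℤ,
    (D.reflX c).Cov zx zy ↔ D.Cov (c - zx) zy := by
  induction D with
  | nil => simp [reflX, Cov]
  | node a x y l r hl hr =>
    intro zx zy
    have h : zx = c - x ↔ c - zx = x := by omega
    simp only [reflX, Cov, hl, hr, arm_reflX, h]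
    tauto

theorem cov_reflY (c : ℤ) (D : DT α) : ∀ zx zy : ℤ,
    (D.reflY c).Cov zx zy ↔ D.Cov zx (c - zy) := by
  induction D with
  | nil => simp [reflY, Cov]
  | node a x y l r hl hr =>
    intro zx zy
    have h : zy = c - y ↔ c - zy = y := by omega
    simp only [reflY, Cov, hl, hr, arm_reflY, h]
    tauto

theorem link_reflX (c x y : ℤ) (d : Dir) (D : DT α) (h : D.Link d x y) :
    (D.reflX c).Link d.flipX (c - x) y := by
  cases D with
  | nil => trivial
  | node a qx qy l r =>
    refine ⟨?_, fun zx zy hz hb => ?_⟩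
    · have := h.1
      cases d <;> simp only [At, Dir.flipX] at this ⊢ <;> omega
    · have := h.2 (c - zx) zy ((cov_reflX c (node a qx qy l r) zx zy).1 hz)
        (by simp only [Box] at hb ⊢; omega)
      omega

theorem link_reflY (c x y : ℤ) (d : Dir) (D : DT α) (h : D.Link d x y) :
    (D.reflY c).Link d.flipY x (c - y) := by
  cases D with
  | nil => trivial
  | node a qx qy l r =>
    refine ⟨?_, fun zx zy hz hb => ?_⟩
    · have := h.1
      cases d <;> simp only [At, Dir.flipY] at this ⊢ <;> omega
    · have := h.2 zx (c - zy) ((cov_reflY c (node a qx qy l r) zx zy).1 hz)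
        (by simp only [Box] at hb ⊢; omega)
      omega

theorem ok_reflX (c : ℤ) (D : DT α) : ∀ d : Dir, D.OK d → (D.reflX c).OK d.flipX := by
  induction D with
  | nil => intros; trivial
  | node a x y l r hl hr =>
    rintro d ⟨dl, dr, ho, kl, kr, ol, or, h1, h2, h3⟩
    refine ⟨dr.flipX, dl.flipX, ?_, link_reflX c x y dr r kr, link_reflX c x y dl l kl,
      ?_, ?_, ?_, ?_, ?_⟩
    · revert ho
      cases d <;> cases dl <;> cases dr <;> simp [Ccw, turn, ix, Dir.flipX]
    · have := hr _ or
      cases dr <;> exact this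
    · have := hl _ ol
      cases dl <;> exact this
    · intro zx zy
      rw [cov_reflX, cov_reflX]
      exact fun a b => h1 _ _ b a
    · intro zx zy
      rw [cov_reflX, arm_reflX]
      exact h3 _ _
    · intro zx zy
      rw [cov_reflX, arm_reflX]
      exact h2 _ _

theorem ok_reflY (c : ℤ) (D : DT α) : ∀ d : Dir, D.OK d → (D.reflY c).OK d.flipY := by
  induction D with
  | nil => intros; trivial
  | node a x y l r hl hr =>
    rintro d ⟨dl, dr, ho, kl, kr, ol, or, h1, h2, h3⟩
    refine ⟨dr.flipY, dl.flipY, ?_, link_reflY c x y dr r kr, link_reflY c x y dl l kl,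
      ?_, ?_, ?_, ?_, ?_⟩
    · revert ho
      cases d <;> cases dl <;> cases dr <;> simp [Ccw, turn, ix, Dir.flipY]
    · have := hr _ or
      cases dr <;> exact this
    · have := hl _ ol
      cases dl <;> exact this
    · intro zx zy
      rw [cov_reflY, cov_reflY]
      exact fun a b => h1 _ _ b a
    · intro zx zy
      rw [cov_reflY, arm_reflY]
      exact h3 _ _
    · intro zx zy
      rw [cov_reflY, arm_reflY]
      exact h2 _ _

end DT

open DT

/-- The tree `t` has a drawing with root at `(x, y)`, with the parent of the root thought to lie in
direction `d`, that covers only grid points of the region `R`. -/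
def Fig (t : BT α) (d : Dir) (x y : ℤ) (R : ℤ → ℤ → Prop) : Prop :=
  ∃ D : DT α, D.shape = t ∧ D.OK d ∧ D.RootAt x y ∧ ∀ zx zy, D.Cov zx zy → R zx zy

theorem Fig.nil (d : Dir) (x y : ℤ) (R : ℤ → ℤ → Prop) : Fig (.nil : BT α) d x y R :=
  ⟨.nil, rfl, trivial, trivial, fun _ _ h => h.elim⟩

theorem Fig.mono {t : BT α} {d : Dir} {x y : ℤ} {R R' : ℤ → ℤ → Prop} (h : Fig t d x y R)
    (hR : ∀ zx zy, R zx zy → R' zx zy) : Fig t d x y R' := by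
  obtain ⟨D, h1, h2, h3, h4⟩ := h
  exact ⟨D, h1, h2, h3, fun _ _ hz => hR _ _ (h4 _ _ hz)⟩

theorem Fig.reflX {t : BT α} {d : Dir} {x y : ℤ} {R : ℤ → ℤ → Prop} (h : Fig t d x y R) (c : ℤ) :
    Fig t.mirror d.flipX (c - x) y (fun zx zy => R (c - zx) zy) := by
  obtain ⟨D, rfl, h2, h3, h4⟩ := h
  refine ⟨D.reflX c, shape_reflX c D, ok_reflX c D d h2, ?_, fun zx zy hz => ?_⟩
  · cases D with
    | nil => trivial
    | node a px py l r => exact ⟨by rw [h3.1], h3.2⟩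
  · exact h4 _ _ ((cov_reflX c D zx zy).1 hz)

theorem Fig.reflY {t : BT α} {d : Dir} {x y : ℤ} {R : ℤ → ℤ → Prop} (h : Fig t d x y R) (c : ℤ) :
    Fig t.mirror d.flipY x (c - y) (fun zx zy => R zx (c - zy)) := by
  obtain ⟨D, rfl, h2, h3, h4⟩ := h
  refine ⟨D.reflY c, shape_reflY c D, ok_reflY c D d h2, ?_, fun zx zy hz => ?_⟩
  · cases D with
    | nil => trivial
    | node a px py l r => exact ⟨h3.1, by rw [h3.2]⟩
  · exact h4 _ _ ((cov_reflY c D zx zy).1 hz)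

theorem Fig.translate {t : BT α} {d : Dir} {x y : ℤ} {R : ℤ → ℤ → Prop} (h : Fig t d x y R)
    (u v : ℤ) : Fig t d (x + u) (y + v) (fun zx zy => R (zx - u) (zy - v)) := by
  have h' := (((h.reflX 0).reflX u).reflY 0).reflY v
  have e : ((d.flipX.flipX).flipY).flipY = d := by cases d <;> rfl
  simp only [BT.mirror_mirror, e] at h'
  convert h' using 1
  · ring
  · ring
  · funext zx zy
    congr 1 <;> ring

/-- Joining a vertex at `(x, y)` to two drawings. All hypotheses are inclusions and disjointness
statements about the regions containing the two drawings and the two new edges. -/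
theorem Fig.node {l r : BT α} {dl dr : Dir} {lx ly rx ry : ℤ} {L R : ℤ → ℤ → Prop}
    (hl : Fig l dl.opp lx ly L) (hr : Fig r dr.opp rx ry R) (a : α) (d : Dir) (x y : ℤ)
    (ho : Ccw d dl dr) (al : At dl x y lx ly) (ar : At dr x y rx ry)
    (bl : ∀ zx zy, L zx zy → Box x y lx ly zx zy → zx = lx ∧ zy = ly)
    (br : ∀ zx zy, R zx zy → Box x y rx ry zx zy → zx = rx ∧ zy = ry)
    (h1 : ∀ zx zy, L zx zy → R zx zy → False)
    (h2 : ∀ zx zy, L zx zy → Box x y rx ry zx zy → False)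
    (h3 : ∀ zx zy, R zx zy → Box x y lx ly zx zy → False) :
    Fig (.node a l r) d x y (fun zx zy => (zx = x ∧ zy = y) ∨ L zx zy ∨ R zx zy ∨
      Box x y lx ly zx zy ∨ Box x y rx ry zx zy) := by
  obtain ⟨D, rfl, o, p, cD⟩ := hl
  obtain ⟨D', rfl, o', p', cD'⟩ := hr
  have armBox : ∀ (D : DT α) (qx qy : ℤ), D.RootAt qx qy → ∀ zx zy, D.Arm x y zx zy →
      Box x y qx qy zx zy := by
    intro D qx qy h zx zy hz
    cases D with
    | nil => exact hz.elim
    | node a px py l r => obtain ⟨rfl, rfl⟩ := h; exact hz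
  have link : ∀ (D : DT α) (dd : Dir) (qx qy : ℤ) (Q : ℤ → ℤ → Prop), D.RootAt qx qy →
      At dd x y qx qy → (∀ zx zy, D.Cov zx zy → Q zx zy) →
      (∀ zx zy, Q zx zy → Box x y qx qy zx zy → zx = qx ∧ zy = qy) → D.Link dd x y := by
    intro D dd qx qy Q h hat hc hb
    cases D with
    | nil => trivial
    | node a px py l r =>
      obtain ⟨rfl, rfl⟩ := h
      exact ⟨hat, fun zx zy hz hz' => hb _ _ (hc _ _ hz) hz'⟩
  refine ⟨.node a x y D D', rfl, ⟨dl, dr, ho, link D dl lx ly L p al cD bl,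
    link D' dr rx ry R p' ar cD' br, o, o',
    fun zx zy a b => h1 _ _ (cD _ _ a) (cD' _ _ b),
    fun zx zy a b => h2 _ _ (cD _ _ a) (armBox D' _ _ p' _ _ b),
    fun zx zy a b => h3 _ _ (cD' _ _ a) (armBox D _ _ p _ _ b)⟩, ⟨rfl, rfl⟩, ?_⟩
  rintro zx zy (h | h | h | h | h)
  · exact Or.inl h
  · exact Or.inr (Or.inl (cD _ _ h))
  · exact Or.inr (Or.inr (Or.inl (cD' _ _ h)))
  · exact Or.inr (Or.inr (Or.inr (Or.inl (armBox D _ _ p _ _ h))))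
  · exact Or.inr (Or.inr (Or.inr (Or.inr (armBox D' _ _ p' _ _ h))))

/-! ### Layouts of prescribed width -/

/-- The tree `t` has a drawing of width `w`, in columns `-w, …, -1`, whose root lies in row `0` and
sees the parent in the east along a free horizontal ray. -/
def HBlk (t : BT α) (w : ℤ) : Prop :=
  ∃ h q : ℤ, 0 ≤ h ∧ -w ≤ q ∧ q ≤ -1 ∧ Fig t .E q 0 (fun x y =>
    -w ≤ x ∧ x ≤ -1 ∧ -h ≤ y ∧ y ≤ h ∧ (y = 0 → x ≤ q))

/-- The tree `t` has a drawing in columns `-w, …, 0` and in negative rows whose root lies in column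
`0` and sees the parent in the north along a free vertical ray. -/
def Spine (t : BT α) (w : ℤ) : Prop :=
  ∃ ry k : ℤ, -k ≤ ry ∧ ry ≤ -1 ∧ Fig t .N 0 ry (fun x y =>
    -w ≤ x ∧ x ≤ 0 ∧ -k ≤ y ∧ y ≤ -1 ∧ (x = 0 → y ≤ ry))

/-- The tree `t` has drawings in columns `-c, …, d` with the root in column `0`, below row `0`, such
that arbitrarily high gaps (the rows `0, …, H`) are left free in the columns `-a, …, b`, and such
that the root sees the gap along a free vertical ray. Further vertices can be inserted between the
root and its parent inside the gap. -/
def Sd (t : BT α) (a b c d : ℤ) : Prop :=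
  ∀ H : ℤ, 0 ≤ H → ∃ ry k : ℤ, -k ≤ ry ∧ ry ≤ -1 ∧ Fig t .N 0 ry (fun x y =>
    -c ≤ x ∧ x ≤ d ∧ -k ≤ y ∧ y ≤ k ∧ (0 ≤ y → y ≤ H → x < -a ∨ b < x) ∧
      (x = 0 → ry < y → H < y))

theorem HBlk.nil {w : ℤ} (hw : 1 ≤ w) : HBlk (.nil : BT α) w :=
  ⟨0, -1, le_rfl, by omega, le_rfl, Fig.nil _ _ _ _⟩

theorem HBlk.mono {t : BT α} {w w' : ℤ} (h : HBlk t w) (hw : w ≤ w') : HBlk t w' := by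
  obtain ⟨k, q, h1, h2, h3, h4⟩ := h
  exact ⟨k, q, h1, by omega, h3, h4.mono fun x y h => by omega⟩

theorem HBlk.of_mirror {t : BT α} {w : ℤ} (h : HBlk t.mirror w) : HBlk t w := by
  obtain ⟨k, q, h1, h2, h3, h4⟩ := h
  have h5 := h4.reflY 0
  rw [BT.mirror_mirror] at h5
  exact ⟨k, q, h1, h2, h3, h5.mono fun x y h => by omega⟩

/-- The same block, reflected so that the parent lies in the west. -/
theorem HBlk.west {t : BT α} {w : ℤ} (h : HBlk t.mirror w) :
    ∃ h q : ℤ, 0 ≤ h ∧ 1 ≤ q ∧ q ≤ w ∧ Fig t .W q 0 (fun x y =>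
      1 ≤ x ∧ x ≤ w ∧ -h ≤ y ∧ y ≤ h ∧ (y = 0 → q ≤ x)) := by
  obtain ⟨k, q, h1, h2, h3, h4⟩ := h
  have h5 := h4.reflX 0
  rw [BT.mirror_mirror] at h5
  rw [show (0 : ℤ) - q = -q by ring] at h5
  exact ⟨k, -q, h1, by omega, by omega, h5.mono fun x y h => by omega⟩

theorem Spine.nil (w : ℤ) : Spine (.nil : BT α) w :=
  ⟨-1, 1, le_rfl, le_rfl, Fig.nil _ _ _ _⟩

theorem Spine.mono {t : BT α} {w w' : ℤ} (h : Spine t w) (hw : w ≤ w') : Spine t w' := by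
  obtain ⟨k, q, h1, h2, h4⟩ := h
  exact ⟨k, q, h1, h2, h4.mono fun x y h => by omega⟩

/-- A spine reflected in a horizontal line: the parent lies in the south. -/
theorem Spine.flipY {t : BT α} {w : ℤ} (h : Spine t.mirror w) :
    ∃ ry k : ℤ, 1 ≤ ry ∧ ry ≤ k ∧ Fig t .S 0 ry (fun x y =>
      -w ≤ x ∧ x ≤ 0 ∧ 1 ≤ y ∧ y ≤ k ∧ (x = 0 → ry ≤ y)) := by
  obtain ⟨ry, k, h1, h2, h4⟩ := h
  have h5 := h4.reflY 0
  rw [BT.mirror_mirror, show (0 : ℤ) - ry = -ry by ring] at h5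
  exact ⟨-ry, k, by omega, by omega, h5.mono fun x y h => by omega⟩

/-- A spine reflected in a vertical line: the block extends to the east. -/
theorem Spine.flipX {t : BT α} {w : ℤ} (h : Spine t.mirror w) :
    ∃ ry k : ℤ, -k ≤ ry ∧ ry ≤ -1 ∧ Fig t .N 0 ry (fun x y =>
      0 ≤ x ∧ x ≤ w ∧ -k ≤ y ∧ y ≤ -1 ∧ (x = 0 → y ≤ ry)) := by
  obtain ⟨ry, k, h1, h2, h4⟩ := h
  have h5 := h4.reflX 0
  rw [BT.mirror_mirror, show (0 : ℤ) - 0 = 0 by ring] at h5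
  exact ⟨ry, k, by omega, by omega, h5.mono fun x y h => by omega⟩

/-- A spine rotated by a half turn. -/
theorem Spine.rot {t : BT α} {w : ℤ} (h : Spine t w) :
    ∃ ry k : ℤ, 1 ≤ ry ∧ ry ≤ k ∧ Fig t .S 0 ry (fun x y =>
      0 ≤ x ∧ x ≤ w ∧ 1 ≤ y ∧ y ≤ k ∧ (x = 0 → ry ≤ y)) := by
  obtain ⟨ry, k, h1, h2, h4⟩ := h
  have h5 := (h4.reflY 0).reflX 0
  rw [BT.mirror_mirror, show (0 : ℤ) - ry = -ry by ring, show (0 : ℤ) - 0 = 0 by ring] at h5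
  exact ⟨-ry, k, by omega, by omega, h5.mono fun x y h => by omega⟩

theorem Sd.mirror {t : BT α} {a b c d : ℤ} (h : Sd t.mirror a b c d) : Sd t b a d c := by
  intro H hH
  obtain ⟨ry, k, h1, h2, h4⟩ := h H hH
  have h5 := h4.reflX 0
  rw [BT.mirror_mirror, show (0 : ℤ) - 0 = 0 by ring] at h5
  exact ⟨ry, k, h1, h2, h5.mono fun x y h => by omega⟩

/-- Every left subtree hanging off the right spine (the path that starts at the root and follows
right children) satisfies `P`. -/
def RG (P : BT α → Prop) : BT α → Prop
  | .nil => True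
  | .node _ l r => P l ∧ RG P r

/-- The right spine is drawn vertically, the left subtrees as blocks to the west of it. -/
theorem RG.spine {w : ℤ} {t : BT α} (h : RG (fun s => HBlk s w) t) : Spine t w := by
  induction t with
  | nil => exact Spine.nil w
  | node v A D _ ih =>
    obtain ⟨⟨hA, q, a1, a2, a3, fA⟩, hD⟩ := h
    obtain ⟨ry, k, d1, d2, fD⟩ := ih hD
    refine ⟨-hA - 1, k + 2 * hA + 1, by omega, by omega, ?_⟩
    refine (Fig.node (dl := .W) (dr := .S) (fA.translate 0 (-hA - 1))
      (fD.translate 0 (-2 * hA - 1)) v .N 0 (-hA - 1) (by decide) ?_ ?_ ?_ ?_ ?_ ?_ ?_).mono ?_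
    all_goals try simp only [At, Box]
    all_goals (intros; omega)

/-- A spine leaves everything above it free. -/
theorem Spine.sd {t : BT α} {w : ℤ} (h : Spine t w) : Sd t w 0 w 0 := by
  intro H hH
  obtain ⟨ry, k, h1, h2, h4⟩ := h
  exact ⟨ry, k, h1, h2, h4.mono fun x y h => by omega⟩

/-- A new root whose left subtree is a block that fits into the gap. -/
theorem Sd.addL {r A : BT α} {a b c d w : ℤ} (h : Sd r a b c d) (hA : HBlk A w) (wa : w ≤ a)
    (wc : w ≤ c) (hb : 0 ≤ b) (hd : 0 ≤ d) (v : α) : Sd (.node v A r) a b c d := by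
  intro H hH
  obtain ⟨hA, q, a1, a2, a3, fA⟩ := hA
  obtain ⟨ry, k, d1, d2, fD⟩ := h (H + 2 * hA + 1) (by omega)
  refine ⟨-hA - 1, k + 2 * hA + 1, by omega, by omega, ?_⟩
  refine (Fig.node (dl := .W) (dr := .S) (fA.translate 0 (-hA - 1))
    (fD.translate 0 (-2 * hA - 1)) v .N 0 (-hA - 1) (by decide) ?_ ?_ ?_ ?_ ?_ ?_ ?_).mono ?_
  all_goals try simp only [At, Box]
  all_goals (intros; omega)

theorem Sd.addR {r A : BT α} {a b c d w : ℤ} (h : Sd r a b c d) (hA : HBlk A.mirror w) (wb : w ≤ b)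
    (wd : w ≤ d) (ha : 0 ≤ a) (hc : 0 ≤ c) (v : α) : Sd (.node v r A) a b c d := by
  refine Sd.mirror (Sd.addL (r := r.mirror) (Sd.mirror ?_) hA wb wd ha hc v)
  rwa [BT.mirror_mirror]

/-- A root whose left subtree is a block fitting into the gap; the free columns `0, …, d` of the gap
let the root see its parent in the east. -/
theorem Sd.root {l r : BT α} {a c d w : ℤ} (h : Sd r a d c d) (hl : HBlk l w) (wa : w ≤ a)
    (wc : w ≤ c) (hd : 0 ≤ d) (v : α) : HBlk (.node v l r) (c + d + 1) := by
  obtain ⟨hA, q, a1, a2, a3, fA⟩ := hl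
  obtain ⟨ry, k, d1, d2, fD⟩ := h (2 * hA) (by omega)
  refine ⟨k + 2 * hA, -d - 1, by omega, by omega, by omega, ?_⟩
  refine (Fig.node (dl := .W) (dr := .S) (fA.translate (-d - 1) 0)
    (fD.translate (-d - 1) (-hA)) v .E (-d - 1) 0 (by decide) ?_ ?_ ?_ ?_ ?_ ?_ ?_).mono ?_
  all_goals try simp only [At, Box]
  all_goals (intros; omega)

/-- The path `v, u` turns right and then left into `s`: `u` is placed in the rightmost column, and
everything is drawn below the gap. -/
theorem Sd.rl {A s B : BT α} {a b c d w F : ℤ} (hA : HBlk A w) (hs : Spine s F)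
    (hB : Spine B.mirror w) (wc : w ≤ c) (wd : w + 1 ≤ d) (hF : F ≤ c + d) (v u : α) :
    Sd (.node v A (.node u s B)) a b c d := by
  intro H hH
  obtain ⟨hA, q, a1, a2, a3, fA⟩ := hA
  obtain ⟨sy, sk, s1, s2, fs⟩ := hs
  obtain ⟨bv, bk, b1, b2, fB⟩ := hB.flipY
  refine ⟨-hA - bk - 1, sk + 2 * hA + bk + 1, by omega, by omega, ?_⟩
  refine (Fig.node (dl := .W) (dr := .E) (fA.translate 0 (-hA - bk - 1))
    (Fig.node (dl := .S) (dr := .N) (fs.translate d (-2 * hA - bk - 1))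
      (fB.translate d (-hA - bk - 1)) u .W d (-hA - bk - 1) (by decide) ?_ ?_ ?_ ?_ ?_ ?_ ?_)
    v .N 0 (-hA - bk - 1) (by decide) ?_ ?_ ?_ ?_ ?_ ?_ ?_).mono ?_
  all_goals try simp only [At, Box, and_true]
  all_goals (intros; omega)

/-- The path `v, u` turns left twice, into `s`: `u` is placed in the leftmost column, and `s` is
drawn above the gap, connected by an edge that crosses the gap in the leftmost column. -/
theorem Sd.ll {A s B : BT α} {a b c d w F : ℤ} (hA : HBlk A.mirror w) (hs : Spine s F)
    (hB : Spine B.mirror w) (wc : w + 1 ≤ c) (wd : w ≤ d) (hF : F ≤ c + d) (ac : a < c)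
    (hd : 0 ≤ d) (v u : α) : Sd (.node v (.node u s B) A) a b c d := by
  intro H hH
  obtain ⟨hA, q, a1, a2, a3, fA⟩ := hA.west
  obtain ⟨sy, sk, s1, s2, fs⟩ := hs.rot
  obtain ⟨bv, bk, b1, b2, fB⟩ := hB.flipX
  refine ⟨-hA - 1, sk + H + 2 * hA + bk + 1, by omega, by omega, ?_⟩
  refine (Fig.node (dl := .W) (dr := .E)
    (Fig.node (dl := .N) (dr := .S) (fs.translate (-c) H)
      (fB.translate (-c) (-hA - 1)) u .E (-c) (-hA - 1) (by decide) ?_ ?_ ?_ ?_ ?_ ?_ ?_)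
    (fA.translate 0 (-hA - 1))
    v .N 0 (-hA - 1) (by decide) ?_ ?_ ?_ ?_ ?_ ?_ ?_).mono ?_
  all_goals try simp only [At, Box, and_true]
  all_goals (intros; omega)

/-- A drawing with the root `v` in the rightmost column and its right child `u` in the leftmost
column. -/
theorem HBlk.rl {A s B : BT α} {e w F : ℤ} (hA : Spine A.mirror w) (hs : Spine s F)
    (hB : Spine B.mirror w) (we : w + 1 ≤ e) (hF : F ≤ e) (he : 1 ≤ e) (v u : α) :
    HBlk (.node v A (.node u s B)) (e + 1) := by
  obtain ⟨ay, ak, a1, a2, fA⟩ := hA.flipY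
  obtain ⟨sy, sk, s1, s2, fs⟩ := hs.rot
  obtain ⟨bv, bk, b1, b2, fB⟩ := hB.flipX
  refine ⟨sk + ak + bk, -1, by omega, by omega, by omega, ?_⟩
  refine (Fig.node (dl := .N) (dr := .W) (fA.translate (-1) 0)
    (Fig.node (dl := .N) (dr := .S) (fs.translate (-e - 1) ak)
      (fB.translate (-e - 1) 0) u .E (-e - 1) 0 (by decide) ?_ ?_ ?_ ?_ ?_ ?_ ?_)
    v .E (-1) 0 (by decide) ?_ ?_ ?_ ?_ ?_ ?_ ?_).mono ?_
  all_goals try simp only [At, Box, and_true]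
  all_goals (intros; omega)

/-! ### The recursion for the width -/

/-- All trees with at most `m` vertices have drawings of width `w`. -/
def Wid (α : Type) (m : ℕ) (w : ℤ) : Prop := ∀ t : BT α, t.size ≤ m → HBlk t w

theorem Wid.mirror {m : ℕ} {w : ℤ} (h : Wid α m w) {t : BT α} (ht : t.size ≤ m) :
    HBlk t.mirror w := h _ (by rwa [BT.size_mirror])

theorem Wid.rg {m : ℕ} {w : ℤ} (h : Wid α m w) {t : BT α} (ht : t.size ≤ m) :
    RG (fun s => HBlk s w) t := by
  induction t with
  | nil => trivial
  | node v l r _ ih =>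
    simp only [BT.size] at ht
    exact ⟨h l (by omega), ih (by omega)⟩

/-- Follow the heavy path from the root as long as exactly one child subtree has more than `m`
vertices. Either the right spine of `t` carries only left subtrees of width `F`, or this becomes
true by deleting the root with a small right subtree, or the heavy path makes, somewhere, two
consecutive steps that can be drawn as in `Sd.rl` or `Sd.ll`; all earlier steps are inserted into
the gap of that drawing. -/
theorem classify {m N : ℕ} {w F K : ℤ} (hm : Wid α m w) (hN : Wid α N F) (hmN : m ≤ N)
    (hw : 1 ≤ w) (hK : 2 * w + 3 ≤ K) (hF : F + 1 ≤ K) (t : BT α) (ht : t.size ≤ N + m + 1) :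
    RG (fun s => HBlk s F) t ∨
    (∃ u s B, t = .node u s B ∧ B.size ≤ m ∧ RG (fun s => HBlk s F) s) ∨
    Sd t w (w + 1) (K - w - 2) (w + 1) := by
  induction t with
  | nil => exact Or.inl trivial
  | node v l r ihl ihr =>
    simp only [BT.size] at ht
    by_cases hl : l.size ≤ m
    · rcases ihr (by omega) with h | ⟨u, s, B, rfl, hB, hs⟩ | h
      · exact Or.inl ⟨hN l (by omega), h⟩
      · exact Or.inr (Or.inr (Sd.rl (hm l hl) hs.spine (hm.rg (by simpa using hB)).spine
          (by omega) (by omega) (by omega) v u))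
      · exact Or.inr (Or.inr (h.addL (hm l hl) le_rfl (by omega) (by omega) (by omega) v))
    · by_cases hr : r.size ≤ m
      · rcases ihl (by omega) with h | ⟨u, s, B, rfl, hB, hs⟩ | h
        · exact Or.inr (Or.inl ⟨v, l, r, rfl, hr, h⟩)
        · exact Or.inr (Or.inr (Sd.ll (hm.mirror hr) hs.spine (hm.rg (by simpa using hB)).spine
            (by omega) (by omega) (by omega) (by omega) (by omega) v u))
        · exact Or.inr (Or.inr (h.addR (hm.mirror hr) (by omega) (by omega) (by omega)
            (by omega) v))
      · exact Or.inl ⟨hN l (by omega), hN.rg (by omega)⟩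

/-- If the right spine of `r` carries only left subtrees of width `F`, a root with left subtree of
width `F` can be put on top of that spine. -/
theorem RG.block {l r : BT α} {F : ℤ} (hl : HBlk l F)
    (hr : RG (fun s => HBlk s F) r) (v : α) : HBlk (.node v l r) (F + 1) := by
  simpa using hr.spine.sd.root hl le_rfl le_rfl le_rfl v

/-- The case of `Wid.step` in which the left subtree of the root is small: the classification of the
right subtree along its heavy path yields a drawing in each case. -/
theorem step_right {m N : ℕ} {w F K : ℤ} (hm : Wid α m w) (hN : Wid α N F) (hmN : m ≤ N)
    (hw : 1 ≤ w) (hF0 : 0 ≤ F) (hK : 2 * w + 3 ≤ K) (hF : F + 1 ≤ K) (v : α) (l r : BT α)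
    (hl : l.size ≤ m) (hr : r.size ≤ N + m + 1) : HBlk (.node v l r) K := by
  rcases classify hm hN hmN hw hK hF r hr with h | ⟨u, s, B, rfl, hB, hs⟩ | h
  · exact (RG.block (hN l (by omega)) h v).mono hF
  · exact (HBlk.rl (e := K - 1) (hm.rg (by simpa using hl)).spine hs.spine
      (hm.rg (by simpa using hB)).spine (by omega) (by omega) (by omega) v u).mono (by omega)
  · exact (h.root (hm l hl) le_rfl (by omega) (by omega) v).mono (by omega)

/-- Enlarging the size from `N` by `m + 1` costs only one more column, as soon as the width is at
least twice the width needed for size `m`. -/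
theorem Wid.step {m N : ℕ} {w F K : ℤ} (hm : Wid α m w) (hN : Wid α N F) (hmN : m ≤ N)
    (hw : 1 ≤ w) (hF0 : 0 ≤ F) (hK : 2 * w + 3 ≤ K) (hF : F + 1 ≤ K) : Wid α (N + m + 1) K := by
  intro t ht
  cases t with
  | nil => exact HBlk.nil (by omega)
  | node v l r =>
    simp only [BT.size] at ht
    by_cases hl : l.size ≤ m
    · exact step_right hm hN hmN hw hF0 hK hF v l r hl (by omega)
    · by_cases hr : r.size ≤ m
      · exact HBlk.of_mirror (step_right hm hN hmN hw hF0 hK hF v r.mirror l.mirror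
          (by simpa using hr) (by rw [BT.size_mirror]; omega))
      · exact (RG.block (hN l (by omega)) (hN.rg (by omega)) v).mono hF

theorem Wid.iterate {m : ℕ} {w : ℤ} (hm : Wid α m w) (hw : 1 ≤ w) (k : ℕ) :
    Wid α ((k + 1) * m) (2 * w + 2 + k) := by
  induction k with
  | zero => exact fun t ht => (hm t (by simpa using ht)).mono (by omega)
  | succ k ih =>
    intro t ht
    refine Wid.step hm ih ?_ hw (by omega) (K := 2 * w + 2 + (k + 1 : ℕ)) (by omega) (by omega)
      t (by rw [Nat.add_mul] at ht; omega)
    exact Nat.le_mul_of_pos_left m (by omega)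

theorem tri_succ (j : ℕ) : (j + 1) * (j + 1 + 1) / 2 = j * (j + 1) / 2 + (j + 1) := by
  rw [show (j + 1) * (j + 1 + 1) = j * (j + 1) + (j + 1) * 2 by ring,
    Nat.add_mul_div_right _ _ (by norm_num)]

/-- Multiplying the size by `2 ^ (j + 1)` at the `j`-th stage at most doubles the width, up to an
additive `O(2 ^ j)`. -/
theorem wid_pow (j : ℕ) : Wid α (2 ^ (j * (j + 1) / 2)) (2 ^ j * (2 * j + 5)) := by
  induction j with
  | zero =>
    have h0 : Wid α 0 1 := by
      intro t ht
      cases t with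
      | nil => exact HBlk.nil le_rfl
      | node v l r => simp [BT.size] at ht
    simpa using h0.step h0 le_rfl le_rfl (by norm_num) (K := 5) (by norm_num) (by norm_num)
  | succ j ih =>
    have hp : (1 : ℤ) ≤ 2 ^ j := one_le_pow₀ (by norm_num)
    have h := ih.iterate (by nlinarith) (2 ^ (j + 1) - 1)
    rw [Nat.sub_add_cancel Nat.one_le_two_pow, ← pow_add, add_comm (j + 1), ← tri_succ] at h
    refine fun t ht => (h t ht).mono ?_
    rw [Nat.cast_sub Nat.one_le_two_pow]
    push_cast
    rw [pow_succ]
    nlinarith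

/-- With `L = log₂ n`, stage `j = ⌈√(2L)⌉` of `wid_pow` reaches size `n`, and its width is
`O(2 ^ √(2L) * √L)`. -/
theorem exists_width (α : Type) (n : ℕ) (hn : 2 ≤ n) : ∃ w : ℕ, Wid α n w ∧
    (w : ℝ) ≤ 20 * (2 : ℝ) ^ Real.sqrt (2 * Real.logb 2 n) * Real.sqrt (Real.logb 2 n) := by
  have hn0 : (0 : ℝ) < n := by exact_mod_cast (by omega : 0 < n)
  set L := Real.logb 2 n with hL
  have hL1 : 1 ≤ L := by
    rw [hL, Real.le_logb_iff_rpow_le (by norm_num) hn0, Real.rpow_one]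
    exact_mod_cast hn
  set x := Real.sqrt (2 * L) with hx
  have hx0 : 0 ≤ x := Real.sqrt_nonneg _
  have hx2 : x * x = 2 * L := Real.mul_self_sqrt (by linarith)
  set y := Real.sqrt L with hy
  have hy2 : y * y = L := Real.mul_self_sqrt (by linarith)
  have hy1 : 1 ≤ y := Real.one_le_sqrt.2 hL1
  have hxy : x ≤ 3 / 2 * y := by
    by_contra! h
    nlinarith
  -- with this `j`, the size `2 ^ (j * (j + 1) / 2)` reached at the `j`-th stage is at least `n`
  set j := ⌈x⌉₊ with hj
  have hj1 : x ≤ j := Nat.le_ceil x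
  have hj2 : (j : ℝ) < x + 1 := Nat.ceil_lt_add_one hx0
  have htri : ((j * (j + 1) / 2 : ℕ) : ℝ) = j * (j + 1) / 2 := by
    rw [Nat.cast_div (Nat.even_mul_succ_self j).two_dvd (by norm_num)]
    push_cast
    ring
  have hnj : n ≤ 2 ^ (j * (j + 1) / 2) := by
    have h : (n : ℝ) ≤ (2 : ℝ) ^ ((j * (j + 1) / 2 : ℕ) : ℝ) := by
      rw [← Real.logb_le_iff_le_rpow (by norm_num) hn0, htri, ← hL]
      nlinarith
    rw [Real.rpow_natCast] at h
    exact_mod_cast h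
  refine ⟨2 ^ j * (2 * j + 5), fun t ht => ?_, ?_⟩
  · have := wid_pow j t (ht.trans hnj)
    push_cast
    exact this
  · have h2 : (2 : ℝ) ^ j ≤ 2 * (2 : ℝ) ^ x := by
      rw [← Real.rpow_natCast, mul_comm, ← Real.rpow_add_one (by norm_num)]
      exact Real.rpow_le_rpow_of_exponent_le (by norm_num) hj2.le
    have h3 : (2 * j + 5 : ℝ) ≤ 10 * y := by linarith
    push_cast
    calc (2 : ℝ) ^ j * (2 * j + 5) ≤ (2 * (2 : ℝ) ^ x) * (10 * y) := by gcongr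
      _ = 20 * (2 : ℝ) ^ x * y := by ring

/-! ### Reading off positions -/

namespace BT

/-- `v` labels a vertex of the tree. -/
def Mem (v : α) : BT α → Prop
  | nil => False
  | node a l r => v = a ∨ l.Mem v ∨ r.Mem v

/-- `v` labels the root of the tree. -/
def IsRoot (v : α) : BT α → Prop
  | nil => False
  | node a _ _ => v = a

/-- The vertex `v` is the left child (`b = false`) or right child (`b = true`) of `u`. -/
def Child (b : Bool) (u v : α) : BT α → Prop
  | nil => False
  | node a l r => (u = a ∧ (cond b r l).IsRoot v) ∨ l.Child b u v ∨ r.Child b u v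

/-- Distinct vertices have distinct labels. -/
def Nodup : BT α → Prop
  | nil => True
  | node a l r => ¬ l.Mem a ∧ ¬ r.Mem a ∧ (∀ v, l.Mem v → r.Mem v → False) ∧ l.Nodup ∧ r.Nodup

theorem IsRoot.mem {v : α} {t : BT α} (h : t.IsRoot v) : t.Mem v := by
  cases t with
  | nil => exact h
  | node a l r => exact Or.inl h

theorem Child.mem {b : Bool} {u v : α} {t : BT α} (h : t.Child b u v) : t.Mem u ∧ t.Mem v := by
  induction t with
  | nil => exact h.elim
  | node a l r hl hr =>
    rcases h with ⟨h1, h2⟩ | h | h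
    · refine ⟨Or.inl h1, Or.inr ?_⟩
      cases b
      · exact Or.inl h2.mem
      · exact Or.inr h2.mem
    · exact ⟨Or.inr (Or.inl (hl h).1), Or.inr (Or.inl (hl h).2)⟩
    · exact ⟨Or.inr (Or.inr (hr h).1), Or.inr (Or.inr (hr h).2)⟩

end BT

theorem At.opp {R : Type} [LT R] {d : Dir} {px py qx qy : R} (h : At d px py qx qy) : At d.opp qx qy px py := by
  cases d <;> exact ⟨h.1, h.2.symm⟩

namespace DT

/-- The vertex labelled `a` is placed at `(X a, Y a)`. -/
def Agr (X Y : α → ℤ) : DT α → Prop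
  | nil => True
  | node a x y l r => X a = x ∧ Y a = y ∧ l.Agr X Y ∧ r.Agr X Y

theorem Agr.congr {X Y X' Y' : α → ℤ} {D : DT α} (h : D.Agr X Y)
    (e : ∀ v, D.shape.Mem v → X v = X' v ∧ Y v = Y' v) : D.Agr X' Y' := by
  induction D with
  | nil => trivial
  | node a x y l r hl hr =>
    obtain ⟨h1, h2, h3, h4⟩ := h
    have := e a (Or.inl rfl)
    exact ⟨by rw [← this.1, h1], by rw [← this.2, h2],
      hl h3 fun v hv => e v (Or.inr (Or.inl hv)), hr h4 fun v hv => e v (Or.inr (Or.inr hv))⟩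

open Classical in
theorem exists_agr (D : DT α) (h : D.shape.Nodup) : ∃ X Y : α → ℤ, D.Agr X Y := by
  induction D with
  | nil => exact ⟨0, 0, trivial⟩
  | node a x y l r hl hr =>
    obtain ⟨h1, h2, h3, h4, h5⟩ := h
    obtain ⟨X, Y, hX⟩ := hl h4
    obtain ⟨X', Y', hX'⟩ := hr h5
    refine ⟨fun v => if v = a then x else if l.shape.Mem v then X v else X' v,
      fun v => if v = a then y else if l.shape.Mem v then Y v else Y' v,
      by simp, by simp, hX.congr fun v hv => ?_, hX'.congr fun v hv => ?_⟩
    · have : v ≠ a := by rintro rfl; exact h1 hv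
      simp [this, hv]
    · have h6 : v ≠ a := by rintro rfl; exact h2 hv
      have h7 : ¬ l.shape.Mem v := fun h => h3 v h hv
      simp [h6, h7]

variable {X Y : α → ℤ}

theorem cov_of_mem {D : DT α} (g : D.Agr X Y) {v : α} (h : D.shape.Mem v) :
    D.Cov (X v) (Y v) := by
  induction D with
  | nil => exact h.elim
  | node a x y l r hl hr =>
    obtain ⟨h1, h2, h3, h4⟩ := g
    rcases h with rfl | h | h
    · exact Or.inl ⟨h1, h2⟩
    · exact Or.inr (Or.inl (hl h3 h))
    · exact Or.inr (Or.inr (Or.inl (hr h4 h)))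

theorem arm_root {D : DT α} (g : D.Agr X Y) {v : α} (h : D.shape.IsRoot v) {x y zx zy : ℤ}
    (hb : Box x y (X v) (Y v) zx zy) : D.Arm x y zx zy := by
  cases D with
  | nil => exact h.elim
  | node a px py l r =>
    obtain rfl : v = a := h
    obtain ⟨rfl, rfl, -, -⟩ := g
    exact hb

theorem link_root {D : DT α} (g : D.Agr X Y) {v : α} (h : D.shape.IsRoot v) {d : Dir} {x y : ℤ}
    (k : D.Link d x y) : At d x y (X v) (Y v) ∧
      ∀ zx zy, D.Cov zx zy → Box x y (X v) (Y v) zx zy → zx = X v ∧ zy = Y v := by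
  cases D with
  | nil => exact h.elim
  | node a px py l r =>
    obtain rfl : v = a := h
    obtain ⟨rfl, rfl, -, -⟩ := g
    exact k

theorem not_cov_of_link {D : DT α} {d : Dir} {x y : ℤ} (k : D.Link d x y) : ¬ D.Cov x y := by
  intro h
  cases D with
  | nil => exact h
  | node a px py l r =>
    have h1 := k.2 x y h (by simp only [Box]; omega)
    have h2 := k.1
    cases d <;> simp only [At] at h2 <;> omega

theorem cov_of_child {D : DT α} (g : D.Agr X Y) {b : Bool} {u v : α} (h : D.shape.Child b u v)
    {zx zy : ℤ} (hb : Box (X u) (Y u) (X v) (Y v) zx zy) : D.Cov zx zy := by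
  induction D with
  | nil => exact h.elim
  | node a x y l r hl hr =>
    obtain ⟨h1, h2, h3, h4⟩ := g
    rcases h with ⟨rfl, h⟩ | h | h
    · rw [h1, h2] at hb
      cases b
      · exact Or.inr (Or.inr (Or.inr (Or.inl (arm_root h3 h hb))))
      · exact Or.inr (Or.inr (Or.inr (Or.inr (arm_root h4 h hb))))
    · exact Or.inr (Or.inl (hl h3 h))
    · exact Or.inr (Or.inr (Or.inl (hr h4 h)))

theorem at_of_child {D : DT α} (g : D.Agr X Y) {d : Dir} (o : D.OK d) {b : Bool} {u v : α}
    (h : D.shape.Child b u v) : ∃ δ, At δ (X u) (Y u) (X v) (Y v) := by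
  induction D generalizing d with
  | nil => exact h.elim
  | node a x y l r hl hr =>
    obtain ⟨h1, h2, h3, h4⟩ := g
    obtain ⟨dl, dr, ho, kl, kr, ol, or, -⟩ := o
    rcases h with ⟨rfl, h⟩ | h | h
    · rw [h1, h2]
      cases b
      · exact ⟨dl, (link_root h3 h kl).1⟩
      · exact ⟨dr, (link_root h4 h kr).1⟩
    · exact hl h3 ol h
    · exact hr h4 or h

theorem inj_of_ok {D : DT α} (g : D.Agr X Y) {d : Dir} (o : D.OK d) {u v : α}
    (hu : D.shape.Mem u) (hv : D.shape.Mem v) (hx : X u = X v) (hy : Y u = Y v) : u = v := by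
  induction D generalizing d with
  | nil => exact hu.elim
  | node a x y l r hl hr =>
    obtain ⟨h1, h2, h3, h4⟩ := g
    obtain ⟨dl, dr, ho, kl, kr, ol, or, q1, q2, q3⟩ := o
    have cl : ∀ w, l.shape.Mem w → ¬ (X w = x ∧ Y w = y) := by
      rintro w hw ⟨rfl, rfl⟩
      exact not_cov_of_link kl (cov_of_mem h3 hw)
    have cr : ∀ w, r.shape.Mem w → ¬ (X w = x ∧ Y w = y) := by
      rintro w hw ⟨rfl, rfl⟩
      exact not_cov_of_link kr (cov_of_mem h4 hw)
    have clr : ∀ w w', l.shape.Mem w → r.shape.Mem w' → ¬ (X w = X w' ∧ Y w = Y w') := by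
      rintro w w' hw hw' ⟨e, e'⟩
      refine q1 _ _ (cov_of_mem h3 hw) ?_
      rw [e, e']
      exact cov_of_mem h4 hw'
    rcases hu with rfl | hu | hu <;> rcases hv with rfl | hv | hv
    · rfl
    · exact (cl _ hv ⟨by omega, by omega⟩).elim
    · exact (cr _ hv ⟨by omega, by omega⟩).elim
    · exact (cl _ hu ⟨by omega, by omega⟩).elim
    · exact hl h3 ol hu hv
    · exact (clr _ _ hu hv ⟨hx, hy⟩).elim
    · exact (cr _ hu ⟨by omega, by omega⟩).elim
    · exact (clr _ _ hv hu ⟨hx.symm, hy.symm⟩).elim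
    · exact hr h4 or hu hv

/-- A vertex does not lie on an edge that it is not incident with. -/
theorem vertex_off_edge {D : DT α} (g : D.Agr X Y) {d : Dir} (o : D.OK d) {b : Bool} {u v w : α}
    (h : D.shape.Child b u v) (hw : D.shape.Mem w) (wu : w ≠ u) (wv : w ≠ v) :
    ¬ Box (X u) (Y u) (X v) (Y v) (X w) (Y w) := by
  induction D generalizing d with
  | nil => exact h.elim
  | node a x y l r hl hr =>
    intro hb
    obtain ⟨h1, h2, h3, h4⟩ := g
    obtain ⟨dl, dr, ho, kl, kr, ol, or, q1, q2, q3⟩ := o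
    rcases h with ⟨rfl, h⟩ | h | h
    · rw [h1, h2] at hb
      cases b
      · rcases hw with hw | hw | hw
        · exact wu hw
        · have e := (link_root h3 h kl).2 _ _ (cov_of_mem h3 hw) hb
          exact wv (inj_of_ok h3 ol hw h.mem e.1 e.2)
        · exact q3 _ _ (cov_of_mem h4 hw) (arm_root h3 h hb)
      · rcases hw with hw | hw | hw
        · exact wu hw
        · exact q2 _ _ (cov_of_mem h3 hw) (arm_root h4 h hb)
        · have e := (link_root h4 h kr).2 _ _ (cov_of_mem h4 hw) hb
          exact wv (inj_of_ok h4 or hw h.mem e.1 e.2)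
    · rcases hw with rfl | hw | hw
      · rw [h1, h2] at hb
        exact not_cov_of_link kl (cov_of_child h3 h hb)
      · exact hl h3 ol h hw hb
      · exact q1 _ _ (cov_of_child h3 h hb) (cov_of_mem h4 hw)
    · rcases hw with rfl | hw | hw
      · rw [h1, h2] at hb
        exact not_cov_of_link kr (cov_of_child h4 h hb)
      · exact q1 _ _ (cov_of_mem h3 hw) (cov_of_child h4 h hb)
      · exact hr h4 or h hw hb

/-- Edges without a common endpoint are disjoint. -/
theorem edge_off_edge {D : DT α} (g : D.Agr X Y) {d : Dir} (o : D.OK d) {b b' : Bool}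
    {u v u' v' : α} (h : D.shape.Child b u v) (h' : D.shape.Child b' u' v')
    (n1 : u ≠ u') (n2 : u ≠ v') (n3 : v ≠ u') (n4 : v ≠ v') {zx zy : ℤ}
    (hb : Box (X u) (Y u) (X v) (Y v) zx zy) : ¬ Box (X u') (Y u') (X v') (Y v') zx zy := by
  induction D generalizing d with
  | nil => exact h.elim
  | node a x y l r hl hr =>
    intro hb'
    obtain ⟨h1, h2, h3, h4⟩ := g
    obtain ⟨dl, dr, ho, kl, kr, ol, or, q1, q2, q3⟩ := o
    -- an edge of a subtree that meets the edge above that subtree contains the root of the subtree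
    have key : ∀ {T : DT α} {dd : Dir} {e : Dir} {c : Bool} {p q s : α}, T.Agr X Y → T.OK e →
        T.Link dd x y → T.shape.IsRoot s → T.shape.Child c p q → s ≠ p → s ≠ q →
        Box (X p) (Y p) (X q) (Y q) zx zy → ¬ Box x y (X s) (Y s) zx zy := by
      intro T dd e c p q s gT oT kT hs hc sp sq hz hz'
      obtain ⟨rfl, rfl⟩ := (link_root gT hs kT).2 _ _ (cov_of_child gT hc hz) hz'
      exact vertex_off_edge gT oT hc hs.mem sp sq hz
    rcases h with ⟨rfl, h⟩ | h | h
    · rw [h1, h2] at hb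
      rcases h' with ⟨rfl, -⟩ | h' | h'
      · exact n1 rfl
      · cases b
        · exact key h3 ol kl h h' n3 n4 hb' hb
        · exact q2 _ _ (cov_of_child h3 h' hb') (arm_root h4 h hb)
      · cases b
        · exact q3 _ _ (cov_of_child h4 h' hb') (arm_root h3 h hb)
        · exact key h4 or kr h h' n3 n4 hb' hb
    · rcases h' with ⟨rfl, h'⟩ | h' | h'
      · rw [h1, h2] at hb'
        cases b'
        · exact key h3 ol kl h' h n2.symm n4.symm hb hb'
        · exact q2 _ _ (cov_of_child h3 h hb) (arm_root h4 h' hb')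
      · exact hl h3 ol h h' hb'
      · exact q1 _ _ (cov_of_child h3 h hb) (cov_of_child h4 h' hb')
    · rcases h' with ⟨rfl, h'⟩ | h' | h'
      · rw [h1, h2] at hb'
        cases b'
        · exact q3 _ _ (cov_of_child h4 h hb) (arm_root h3 h' hb')
        · exact key h4 or kr h' h n2.symm n4.symm hb hb'
      · exact q1 _ _ (cov_of_child h3 h' hb') (cov_of_child h4 h hb)
      · exact hr h4 or h h' hb'

theorem order_root {D : DT α} (g : D.Agr X Y) (nd : D.shape.Nodup) {d : Dir} (o : D.OK d)
    {v p q : α} (hv : D.shape.IsRoot v) (hp : D.shape.Child false v p)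
    (hq : D.shape.Child true v q) :
    ∃ dl dr, Ccw d dl dr ∧ At dl (X v) (Y v) (X p) (Y p) ∧ At dr (X v) (Y v) (X q) (Y q) := by
  cases D with
  | nil => exact hv.elim
  | node a x y l r =>
    obtain rfl : v = a := hv
    obtain ⟨h1, h2, h3, h4⟩ := g
    obtain ⟨dl, dr, ho, kl, kr, -⟩ := o
    obtain ⟨n1, n2, -⟩ := nd
    rcases hp with ⟨-, hp⟩ | hp | hp
    · rcases hq with ⟨-, hq⟩ | hq | hq
      · rw [h1, h2]
        exact ⟨dl, dr, ho, (link_root h3 hp kl).1, (link_root h4 hq kr).1⟩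
      · exact (n1 hq.mem.1).elim
      · exact (n2 hq.mem.1).elim
    · exact (n1 hp.mem.1).elim
    · exact (n2 hp.mem.1).elim

theorem order_of_ok {D : DT α} (g : D.Agr X Y) (nd : D.shape.Nodup) {d : Dir} (o : D.OK d)
    {b : Bool} {v p q w : α} (hw : D.shape.Child b w v) (hp : D.shape.Child false v p)
    (hq : D.shape.Child true v q) :
    ∃ e dl dr, Ccw e dl dr ∧ At e (X v) (Y v) (X w) (Y w) ∧
      At dl (X v) (Y v) (X p) (Y p) ∧ At dr (X v) (Y v) (X q) (Y q) := by
  induction D generalizing d with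
  | nil => exact hw.elim
  | node a x y l r hl hr =>
    obtain ⟨h1, h2, h3, h4⟩ := g
    obtain ⟨dl, dr, ho, kl, kr, ol, or, -⟩ := o
    obtain ⟨n1, n2, n3, n4, n5⟩ := nd
    -- the edges below a vertex of the left (right) subtree belong to that subtree
    have inl : ∀ {c : Bool} {s : α}, l.shape.Mem v → (DT.node a x y l r).shape.Child c v s →
        l.shape.Child c v s := by
      rintro c s m (⟨rfl, -⟩ | h | h)
      · exact (n1 m).elim
      · exact h
      · exact (n3 _ m h.mem.1).elim
    have inr : ∀ {c : Bool} {s : α}, r.shape.Mem v → (DT.node a x y l r).shape.Child c v s →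
        r.shape.Child c v s := by
      rintro c s m (⟨rfl, -⟩ | h | h)
      · exact (n2 m).elim
      · exact (n3 _ h.mem.1 m).elim
      · exact h
    rcases hw with ⟨rfl, h⟩ | h | h
    · rw [h1, h2]
      cases b
      · obtain ⟨e, e', c1, c2, c3⟩ := order_root h3 n4 ol h (inl h.mem hp) (inl h.mem hq)
        exact ⟨_, e, e', c1, (link_root h3 h kl).1.opp, c2, c3⟩
      · obtain ⟨e, e', c1, c2, c3⟩ := order_root h4 n5 or h (inr h.mem hp) (inr h.mem hq)
        exact ⟨_, e, e', c1, (link_root h4 h kr).1.opp, c2, c3⟩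
    · exact hl h3 n4 ol h (inl h.mem.2 hp) (inl h.mem.2 hq)
    · exact hr h4 n5 or h (inr h.mem.2 hp) (inr h.mem.2 hq)

end DT

/-! ### From rooted trees to labelled binary trees -/

theorem parent_unique {V : Type} {G : SimpleGraph V} (hG : G.IsTree) {r u u' w : V}
    (h : IsParent G r u w) (h' : IsParent G r u' w) : u = u' := by
  obtain ⟨p, hp, hl⟩ := hG.connected.exists_path_of_dist r u
  obtain ⟨p', hp', hl'⟩ := hG.connected.exists_path_of_dist r u'
  have e := congrArg Subtype.val ((hG.isAcyclic.subsingleton_path r w).elim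
    ⟨p.concat h.1, (p.concat h.1).isPath_of_length_eq_dist (by
      rw [Walk.length_concat, hl, h.2])⟩
    ⟨p'.concat h'.1, (p'.concat h'.1).isPath_of_length_eq_dist (by
      rw [Walk.length_concat, hl', h'.2])⟩)
  have e' := congrArg Walk.penultimate e
  simpa using e'

theorem parent_or_parent {V : Type} {G : SimpleGraph V} (hG : G.IsTree) (r : V) {u v : V}
    (h : G.Adj u v) : IsParent G r u v ∨ IsParent G r v u := by
  rcases hG.dist_eq_dist_add_one_of_adj r h with e | e
  · exact Or.inr ⟨h.symm, e.symm⟩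
  · exact Or.inl ⟨h, e.symm⟩

/-- `w` is a descendant of `v`, or `v` itself. -/
abbrev Desc {V : Type} (G : SimpleGraph V) (r v w : V) : Prop :=
  Relation.ReflTransGen (IsParent G r) v w

theorem Desc.dist_le {V : Type} {G : SimpleGraph V} {r v w : V} (h : Desc G r v w) :
    G.dist r v ≤ G.dist r w := by
  induction h with
  | refl => exact le_rfl
  | tail _ h ih => exact ih.trans (by have := h.2; omega)

theorem Desc.eq_of_dist_eq {V : Type} {G : SimpleGraph V} {r v w : V} (h : Desc G r v w)
    (e : G.dist r v = G.dist r w) : v = w := by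
  rcases Relation.ReflTransGen.cases_tail h with rfl | ⟨u, h1, h2⟩
  · rfl
  · have h3 : G.dist r v ≤ G.dist r u := Desc.dist_le h1
    have := h2.2
    omega

/-- Two vertices of the same depth with a common descendant coincide. -/
theorem Desc.eq_of_common {V : Type} {G : SimpleGraph V} (hG : G.IsTree) {r v v' w : V}
    (h : Desc G r v w) (h' : Desc G r v' w) (e : G.dist r v = G.dist r v') : v = v' := by
  induction h with
  | refl => exact (Desc.eq_of_dist_eq h' e.symm).symm
  | tail h1 h2 ih =>
    rcases Relation.ReflTransGen.cases_tail h' with rfl | ⟨u, h3, h4⟩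
    · exact Desc.eq_of_dist_eq (h1.tail h2) e
    · rw [parent_unique hG h4 h2] at h3
      exact ih h3

/-- Every rooted tree with a left/right designation is realized by a labelled ordered binary
tree. -/
theorem exists_bt {V : Type} [Fintype V] {G : SimpleGraph V} (hG : G.IsTree) (r : V)
    (lab : V → Bool)
    (hlab : ∀ u v w : V, IsParent G r u v → IsParent G r u w → lab v = lab w → v = w) :
    ∃ t : BT V, t.Nodup ∧ (∀ v, t.Mem v) ∧
      ∀ u w, IsParent G r u w → t.Child (lab w) u w := by
  obtain ⟨B, hB⟩ : ∃ B, ∀ v, G.dist r v ≤ B :=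
    ⟨Finset.univ.sup (G.dist r), fun v => Finset.le_sup (Finset.mem_univ v)⟩
  have main : ∀ k : ℕ, ∀ v, B < G.dist r v + k → ∃ t : BT V, t.IsRoot v ∧ t.Nodup ∧
      (∀ w, t.Mem w ↔ Desc G r v w) ∧
      ∀ u w, IsParent G r u w → t.Mem u → t.Child (lab w) u w := by
    intro k
    induction k with
    | zero => exact fun v hv => absurd (hB v) (by omega)
    | succ k ih =>
      intro v hv
      have sub : ∀ b, ∃ t : BT V, t.Nodup ∧
          (∀ w, t.Mem w ↔ ∃ c, IsParent G r v c ∧ lab c = b ∧ Desc G r c w) ∧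
          (∀ c, IsParent G r v c → lab c = b → t.IsRoot c) ∧
          ∀ u w, IsParent G r u w → t.Mem u → t.Child (lab w) u w := by
        intro b
        by_cases hc : ∃ c, IsParent G r v c ∧ lab c = b
        · obtain ⟨c, hc, rfl⟩ := hc
          obtain ⟨t, t1, t2, t3, t4⟩ := ih c (by have := hc.2; omega)
          refine ⟨t, t2, fun w => ⟨fun h => ⟨c, hc, rfl, (t3 w).1 h⟩, ?_⟩, ?_, t4⟩
          · rintro ⟨c', hc', e, hw⟩
            rw [hlab v c' c hc' hc e] at hw
            exact (t3 w).2 hw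
          · intro c' hc' e
            rwa [hlab v c' c hc' hc e]
        · refine ⟨.nil, trivial, fun w => ⟨fun h => h.elim, ?_⟩, ?_, fun _ _ _ h => h.elim⟩
          · rintro ⟨c, h1, h2, -⟩
            exact hc ⟨c, h1, h2⟩
          · exact fun c h1 h2 => hc ⟨c, h1, h2⟩
      obtain ⟨l, l1, l2, l3, l4⟩ := sub false
      obtain ⟨s, s1, s2, s3, s4⟩ := sub true
      have nov : ∀ c, IsParent G r v c → ¬ Desc G r c v := by
        intro c h h'
        have h1 := Desc.dist_le h'
        have := h.2
        omega
      refine ⟨.node v l s, rfl, ⟨?_, ?_, ?_, l1, s1⟩, fun w => ⟨?_, fun h => ?_⟩, ?_⟩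
      · rw [l2]
        rintro ⟨c, h1, -, h2⟩
        exact nov c h1 h2
      · rw [s2]
        rintro ⟨c, h1, -, h2⟩
        exact nov c h1 h2
      · intro w hl hs
        obtain ⟨c, h1, h2, h3⟩ := (l2 w).1 hl
        obtain ⟨c', h1', h2', h3'⟩ := (s2 w).1 hs
        have := Desc.eq_of_common hG h3 h3' (h1.2.symm.trans h1'.2)
        rw [this, h2'] at h2
        exact absurd h2 (by decide)
      · rintro (rfl | h | h)
        · exact .refl
        · obtain ⟨c, h1, -, h3⟩ := (l2 w).1 h
          exact h3.head h1
        · obtain ⟨c, h1, -, h3⟩ := (s2 w).1 h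
          exact h3.head h1
      · rcases Relation.ReflTransGen.cases_head h with rfl | ⟨c, h1, h2⟩
        · exact Or.inl rfl
        · cases hc : lab c
          · exact Or.inr (Or.inl ((l2 w).2 ⟨c, h1, hc, h2⟩))
          · exact Or.inr (Or.inr ((s2 w).2 ⟨c, h1, hc, h2⟩))
      · rintro u w huw (rfl | h | h)
        · refine Or.inl ⟨rfl, ?_⟩
          cases hc : lab w
          · exact l3 w huw hc
          · exact s3 w huw hc
        · exact Or.inr (Or.inl (l4 u w huw h))
        · exact Or.inr (Or.inr (s4 u w huw h))
  obtain ⟨t, -, t2, t3, t4⟩ := main (B + 1) r (by omega)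
  have all : ∀ v, t.Mem v := by
    have : ∀ k v, G.dist r v = k → Desc G r r v := by
      intro k
      induction k with
      | zero =>
        intro v hv
        rw [(hG.connected r v).dist_eq_zero_iff.1 hv]
      | succ k ih =>
        intro v hv
        obtain ⟨p, -, hp⟩ := hG.connected.exists_path_of_dist v r
        cases p with
        | nil => simp at hv
        | cons h q =>
          rename_i u
          have h1 : IsParent G r u v ∨ IsParent G r v u := parent_or_parent hG r h.symm
          rcases h1 with h1 | h1
          · exact (ih u (by have := h1.2; omega)).tail h1
          · have h2 := SimpleGraph.dist_le q
            rw [Walk.length_cons, SimpleGraph.dist_comm] at hp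
            rw [SimpleGraph.dist_comm] at h2
            have := h1.2
            omega
    exact fun v => (t3 v).2 (this _ v rfl)
  exact ⟨t, t2, all, fun u w h => t4 u w h (all u)⟩

/-- A duplicate-free tree over `V` has at most `|V|` vertices. -/
theorem BT.Nodup.size_le {V : Type} [Fintype V] {t : BT V} (h : t.Nodup) :
    t.size ≤ Fintype.card V := by
  classical
  suffices H : ∃ s : Finset V, (∀ v ∈ s, t.Mem v) ∧ s.card = t.size by
    obtain ⟨s, -, hs⟩ := H
    exact hs ▸ Finset.card_le_univ s
  induction t with
  | nil => exact ⟨∅, by simp, rfl⟩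
  | node a l r hl hr =>
    obtain ⟨n1, n2, n3, n4, n5⟩ := h
    obtain ⟨s, s1, s2⟩ := hl n4
    obtain ⟨s', s1', s2'⟩ := hr n5
    refine ⟨insert a (s ∪ s'), fun v hv => ?_, ?_⟩
    · rcases Finset.mem_insert.1 hv with h | h
      · exact Or.inl h
      · rcases Finset.mem_union.1 h with h | h
        · exact Or.inr (Or.inl (s1 v h))
        · exact Or.inr (Or.inr (s1' v h))
    · have hd : Disjoint s s' := Finset.disjoint_left.2 fun v h h' => n3 v (s1 v h) (s1' v h')
      have ha : a ∉ s ∪ s' := fun h =>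
        (Finset.mem_union.1 h).elim (fun h => n1 (s1 a h)) fun h => n2 (s1' a h)
      rw [Finset.card_insert_of_notMem ha, Finset.card_union_of_disjoint hd, s2, s2', BT.size]

/-! ### Drawings in the real plane -/

/-- The bounding boxes of `a`, `b` and of `c`, `d` are disjoint. This is phrased purely in terms of
the order of the coordinates, so that it survives strictly monotone changes of coordinates. -/
def Sep {R : Type} [LT R] (ax ay bx bv cx cy dx dy : R) : Prop :=
  (ax < cx ∧ ax < dx ∧ bx < cx ∧ bx < dx) ∨ (cx < ax ∧ dx < ax ∧ cx < bx ∧ dx < bx) ∨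
  (ay < cy ∧ ay < dy ∧ bv < cy ∧ bv < dy) ∨ (cy < ay ∧ dy < ay ∧ cy < bv ∧ dy < bv)

theorem sep_of_disjoint {ax ay bx bv cx cy dx dy : ℤ}
    (h : ∀ zx zy, Box ax ay bx bv zx zy → ¬ Box cx cy dx dy zx zy) :
    Sep ax ay bx bv cx cy dx dy := by
  by_contra hs
  simp only [Sep] at hs
  -- if the boxes met, this would be their common lower left corner
  refine h (max (min ax bx) (min cx dx)) (max (min ay bv) (min cy dy)) ?_ ?_ <;>
  · simp only [Box]
    omega

theorem mem_box {p q z : ℝ × ℝ} (h : z ∈ segment ℝ p q) :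
    ((p.1 ≤ z.1 ∧ z.1 ≤ q.1) ∨ (q.1 ≤ z.1 ∧ z.1 ≤ p.1)) ∧
    ((p.2 ≤ z.2 ∧ z.2 ≤ q.2) ∨ (q.2 ≤ z.2 ∧ z.2 ≤ p.2)) := by
  have h := Prod.segment_subset _ _ h
  rw [segment_eq_uIcc, segment_eq_uIcc] at h
  exact ⟨Set.mem_uIcc.1 h.1, Set.mem_uIcc.1 h.2⟩

/-- `Sep` for points of the plane. -/
abbrev SepP (a b c d : ℝ × ℝ) : Prop := Sep a.1 a.2 b.1 b.2 c.1 c.2 d.1 d.2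

/-- `At` for points of the plane. -/
abbrev AtP (δ : Dir) (p q : ℝ × ℝ) : Prop := At δ p.1 p.2 q.1 q.2

theorem SepP.disjoint {a b c d z : ℝ × ℝ} (h : SepP a b c d) (h1 : z ∈ segment ℝ a b)
    (h2 : z ∈ segment ℝ c d) : False := by
  obtain ⟨h3, h4⟩ := mem_box h1
  obtain ⟨h5, h6⟩ := mem_box h2
  rcases h with h | h | h | h
  · rcases h3 with h3 | h3 <;> rcases h5 with h5 | h5 <;> linarith [h.1, h.2.1, h.2.2.1, h.2.2.2]
  · rcases h3 with h3 | h3 <;> rcases h5 with h5 | h5 <;> linarith [h.1, h.2.1, h.2.2.1, h.2.2.2]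
  · rcases h4 with h4 | h4 <;> rcases h6 with h6 | h6 <;> linarith [h.1, h.2.1, h.2.2.1, h.2.2.2]
  · rcases h4 with h4 | h4 <;> rcases h6 with h6 | h6 <;> linarith [h.1, h.2.1, h.2.2.1, h.2.2.2]

theorem SepP.symm {a b c d : ℝ × ℝ} (h : SepP a b c d) : SepP c d a b := by
  simp only [SepP, Sep] at *
  tauto

theorem SepP.swap {a b c d : ℝ × ℝ} (h : SepP a b c d) : SepP b a c d := by
  simp only [SepP, Sep] at *
  tauto

/-- Two axis-parallel segments with a common endpoint `p`, neither containing the other endpoint of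
the other one, meet only in `p`. -/
theorem eq_of_share {p q q' z : ℝ × ℝ} {δ δ' : Dir} (h : AtP δ p q) (h' : AtP δ' p q')
    (s : SepP p q q' q') (s' : SepP p q' q q) (h1 : z ∈ segment ℝ p q)
    (h2 : z ∈ segment ℝ p q') : z = p := by
  obtain ⟨h3, h4⟩ := mem_box h1
  obtain ⟨h5, h6⟩ := mem_box h2
  obtain ⟨px, py⟩ := p
  obtain ⟨qx, qy⟩ := q
  obtain ⟨qx', qy'⟩ := q'
  obtain ⟨zx, zy⟩ := z
  simp only [Prod.mk.injEq]
  cases δ <;> cases δ' <;> simp only [AtP, SepP, Sep, At] at * <;> grind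

/-- The unit vector in direction `δ` as a complex number. -/
noncomputable def Dir.vec : Dir → ℂ
  | .E => 1 | .N => Complex.I | .W => -1 | .S => -Complex.I

theorem AtP.vec {p q : ℝ × ℝ} {δ : Dir} (h : AtP δ p q) :
    ∃ t : ℝ, 0 < t ∧ (⟨(q - p).1, (q - p).2⟩ : ℂ) = t * δ.vec := by
  obtain ⟨px, py⟩ := p
  obtain ⟨qx, qy⟩ := q
  cases δ <;> obtain ⟨h1, h2⟩ := h <;> simp only at h1 h2
  · exact ⟨qx - px, sub_pos.2 h1, by apply Complex.ext <;> simp [Dir.vec, h2]⟩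
  · exact ⟨qy - py, sub_pos.2 h1, by apply Complex.ext <;> simp [Dir.vec, h2]⟩
  · exact ⟨px - qx, sub_pos.2 h1, by apply Complex.ext <;> simp [Dir.vec, h2]⟩
  · exact ⟨py - qy, sub_pos.2 h1, by apply Complex.ext <;> simp [Dir.vec, h2]⟩

theorem ccwAngle_eq {v p q : ℝ × ℝ} {e d : Dir} (h : AtP e v p) (h' : AtP d v q) :
    ccwAngle (p - v) (q - v) = turn e d * (Real.pi / 2) := by
  obtain ⟨s, hs, e1⟩ := h.vec
  obtain ⟨t, ht, e2⟩ := h'.vec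
  have hp := Real.pi_pos
  have key : ((⟨(q - v).1, (q - v).2⟩ : ℂ) / (⟨(p - v).1, (p - v).2⟩ : ℂ)).arg =
      (d.vec / e.vec).arg := by
    rw [e1, e2, mul_div_mul_comm, ← Complex.ofReal_div, Complex.arg_real_mul _ (div_pos ht hs)]
  unfold ccwAngle
  rw [key]
  have n1 : ¬ Real.pi < 0 := hp.not_gt
  have n2 : ¬ Real.pi / 2 < 0 := by linarith
  have n3 : -(Real.pi / 2) < 0 := by linarith
  cases e <;> cases d <;>
    simp [Dir.vec, turn, ix, Complex.arg_one, Complex.arg_I, Complex.arg_neg_I,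
      Complex.arg_neg_one, Complex.I_ne_zero, n1, n2, n3, div_neg, neg_div] <;> ring

theorem ccwAngle_lt {v p q s : ℝ × ℝ} {e dl dr : Dir} (ho : Ccw e dl dr) (h : AtP e v p)
    (hl : AtP dl v q) (hr : AtP dr v s) : ccwAngle (p - v) (q - v) < ccwAngle (p - v) (s - v) := by
  rw [ccwAngle_eq h hl, ccwAngle_eq h hr]
  have := Real.pi_pos
  have h2 : (turn e dl : ℝ) < turn e dr := by exact_mod_cast ho.2
  gcongr

/-- The combinatorial data that make a placement of the vertices an orthogonal order-preserving
drawing. -/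
theorem drawing_of_data {V : Type} {G : SimpleGraph V} (hG : G.IsTree) (r : V) (lab : V → Bool)
    (f : V → ℝ × ℝ)
    (hat : ∀ u v, IsParent G r u v → ∃ δ, AtP δ (f u) (f v))
    (hvv : ∀ u v, u ≠ v → SepP (f u) (f u) (f v) (f v))
    (hve : ∀ u v w, IsParent G r u v → w ≠ u → w ≠ v → SepP (f u) (f v) (f w) (f w))
    (hee : ∀ u v u' v', IsParent G r u v → IsParent G r u' v' → u ≠ u' → u ≠ v' → v ≠ u' →
      v ≠ v' → SepP (f u) (f v) (f u') (f v'))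
    (ho : ∀ p v l rc, IsParent G r p v → IsParent G r v l → lab l = false →
      IsParent G r v rc → lab rc = true → ∃ e dl dr, Ccw e dl dr ∧ AtP e (f v) (f p) ∧
        AtP dl (f v) (f l) ∧ AtP dr (f v) (f rc)) :
    IsStraightLineDrawing G f ∧ IsOrthogonal G f ∧ IsOrderPreserving G r lab f := by
  have hat' : ∀ u v, G.Adj u v → ∃ δ, AtP δ (f u) (f v) := by
    intro u v h
    rcases parent_or_parent hG r h with h | h
    · exact hat _ _ h
    · obtain ⟨δ, h⟩ := hat _ _ h
      exact ⟨_, h.opp⟩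
  have hve' : ∀ u v w, G.Adj u v → w ≠ u → w ≠ v → SepP (f u) (f v) (f w) (f w) := by
    intro u v w h h1 h2
    rcases parent_or_parent hG r h with h | h
    · exact hve _ _ _ h h1 h2
    · exact (hve _ _ _ h h2 h1).swap
  have hee' : ∀ u v u' v', G.Adj u v → G.Adj u' v' → u ≠ u' → u ≠ v' → v ≠ u' →
      v ≠ v' → SepP (f u) (f v) (f u') (f v') := by
    intro u v u' v' h h' h1 h2 h3 h4
    rcases parent_or_parent hG r h with h | h <;> rcases parent_or_parent hG r h' with h' | h'
    · exact hee _ _ _ _ h h' h1 h2 h3 h4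
    · exact (hee _ _ _ _ h h' h2 h1 h4 h3).symm.swap.symm
    · exact (hee _ _ _ _ h h' h3 h4 h1 h2).swap
    · exact (hee _ _ _ _ h h' h4 h3 h2 h1).swap.symm.swap.symm
  have share : ∀ p q q', G.Adj p q → G.Adj p q' → q ≠ q' →
      segment ℝ (f p) (f q) ∩ segment ℝ (f p) (f q') = {f p} := by
    intro p q q' h h' hq
    ext z
    constructor
    · rintro ⟨h1, h2⟩
      obtain ⟨δ, hδ⟩ := hat' _ _ h
      obtain ⟨δ', hδ'⟩ := hat' _ _ h'
      exact eq_of_share hδ hδ' (hve' _ _ _ h h'.ne' hq.symm) (hve' _ _ _ h' h.ne' hq) h1 h2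
    · rintro rfl
      exact ⟨left_mem_segment _ _ _, left_mem_segment _ _ _⟩
  refine ⟨⟨?_, ?_, ?_⟩, ?_, ?_⟩
  · intro u v h
    by_contra hne
    have hs := hvv u v hne
    rw [h] at hs
    exact hs.disjoint (left_mem_segment _ _ _) (left_mem_segment _ _ _)
  · intro u v w h h1 h2 hw
    exact (hve' u v w h h1 h2).disjoint hw (left_mem_segment _ _ _)
  · intro u v u' v' h h' hne
    have hne' : ¬ (u = u' ∧ v = v') ∧ ¬ (u = v' ∧ v = u') := by
      rw [Ne, Sym2.eq_iff] at hne
      tauto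
    have single : ∀ p, (∀ w, ((w = u ∨ w = v) ∧ (w = u' ∨ w = v')) ↔ w = p) →
        f '' {w | (w = u ∨ w = v) ∧ (w = u' ∨ w = v')} = {f p} := by
      intro p hp
      simp only [hp, Set.ofPred_eq_eq_singleton, Set.image_singleton]
    have huv := h.ne
    have huv' := h'.ne
    by_cases e1 : u = u'
    · subst e1
      rw [single u (by grind), share u v v' h h' (by grind)]
    by_cases e2 : u = v'
    · subst e2
      rw [single u (by grind), segment_symm ℝ (f u'), share u v u' h h'.symm (by grind)]
    by_cases e3 : v = u'
    · subst e3
      rw [single v (by grind), segment_symm ℝ (f u), share v u v' h.symm h' (by grind)]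
    by_cases e4 : v = v'
    · subst e4
      rw [single v (by grind), segment_symm ℝ (f u), segment_symm ℝ (f u'),
        share v u u' h.symm h'.symm (by grind)]
    have hs := hee' u v u' v' h h' e1 e2 e3 e4
    rw [show {w | (w = u ∨ w = v) ∧ (w = u' ∨ w = v')} = ∅ by ext w; grind, Set.image_empty]
    ext z
    exact ⟨fun hz => hs.disjoint hz.1 hz.2, fun hz => hz.elim⟩
  · intro u v h
    obtain ⟨δ, hδ⟩ := hat' u v h
    cases δ
    · exact Or.inr hδ.2.symm
    · exact Or.inl hδ.2.symm
    · exact Or.inr hδ.2.symm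
    · exact Or.inl hδ.2.symm
  · intro p v l rc h1 h2 h3 h4 h5
    obtain ⟨e, dl, dr, a1, a2, a3, a4⟩ := ho p v l rc h1 h2 h3 h4 h5
    exact ccwAngle_lt a1 a2 a3 a4

/-! ### Assembly -/

/-- A strictly monotone change of the coordinates preserves `Sep`. -/
theorem Sep.map {ι R R' : Type} [LT R] [LT R'] {X Y : ι → R} {X' Y' : ι → R'}
    (hX : ∀ u v, X u < X v → X' u < X' v) (hY : ∀ u v, Y u < Y v → Y' u < Y' v) {a b c d : ι}
    (h : Sep (X a) (Y a) (X b) (Y b) (X c) (Y c) (X d) (Y d)) :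
    Sep (X' a) (Y' a) (X' b) (Y' b) (X' c) (Y' c) (X' d) (Y' d) := by
  rcases h with ⟨h1, h2, h3, h4⟩ | ⟨h1, h2, h3, h4⟩ | ⟨h1, h2, h3, h4⟩ | ⟨h1, h2, h3, h4⟩
  · exact Or.inl ⟨hX _ _ h1, hX _ _ h2, hX _ _ h3, hX _ _ h4⟩
  · exact Or.inr (Or.inl ⟨hX _ _ h1, hX _ _ h2, hX _ _ h3, hX _ _ h4⟩)
  · exact Or.inr (Or.inr (Or.inl ⟨hY _ _ h1, hY _ _ h2, hY _ _ h3, hY _ _ h4⟩))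
  · exact Or.inr (Or.inr (Or.inr ⟨hY _ _ h1, hY _ _ h2, hY _ _ h3, hY _ _ h4⟩))

theorem At.map {ι R R' : Type} [LT R] [LT R'] {X Y : ι → R} {X' Y' : ι → R'}
    (hX : ∀ u v, X u < X v → X' u < X' v) (hY : ∀ u v, Y u < Y v → Y' u < Y' v)
    (eX : ∀ u v, X u = X v → X' u = X' v) (eY : ∀ u v, Y u = Y v → Y' u = Y' v) {a b : ι} {δ : Dir}
    (h : At δ (X a) (Y a) (X b) (Y b)) : At δ (X' a) (Y' a) (X' b) (Y' b) := by
  cases δ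
  · exact ⟨hX _ _ h.1, eY _ _ h.2⟩
  · exact ⟨hY _ _ h.1, eX _ _ h.2⟩
  · exact ⟨hX _ _ h.1, eY _ _ h.2⟩
  · exact ⟨hY _ _ h.1, eX _ _ h.2⟩

/-- Empty rows can be deleted: there is a strictly monotone relabelling of the occupied rows by
numbers in `1, …, n`. -/
theorem exists_rank {V : Type} [Fintype V] (Y : V → ℤ) : ∃ g : V → ℤ,
    (∀ u v, Y u < Y v → g u < g v) ∧ (∀ u v, Y u = Y v → g u = g v) ∧
    ∀ v, 1 ≤ g v ∧ g v ≤ Fintype.card V := by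
  classical
  let S : ℤ → Finset ℤ := fun y => (Finset.univ.image Y).filter (· ≤ y)
  refine ⟨fun v => (S (Y v)).card, fun u v h => ?_, fun u v h => by simp only [h],
    fun v => ⟨?_, ?_⟩⟩
  · have : S (Y u) ⊂ S (Y v) := by
      rw [Finset.ssubset_iff_of_subset]
      · exact ⟨Y v, by simp [S], by simp [S, h]⟩
      · intro y hy
        simp only [S, Finset.mem_filter] at hy ⊢
        exact ⟨hy.1, hy.2.trans h.le⟩
    exact Int.ofNat_lt.2 (Finset.card_lt_card this)
  · have : 0 < (S (Y v)).card := Finset.card_pos.2 ⟨Y v, by simp [S]⟩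
    exact Int.ofNat_lt.2 this
  · have : (S (Y v)).card ≤ Fintype.card V :=
      (Finset.card_filter_le _ _).trans Finset.card_image_le
    exact Int.ofNat_le.2 this

theorem exists_drawing {V : Type} [Fintype V] {G : SimpleGraph V} (hG : G.IsTree) (r : V)
    (lab : V → Bool)
    (hlab : ∀ u v w : V, IsParent G r u v → IsParent G r u w → lab v = lab w → v = w) {w : ℕ}
    (hw : Wid V (Fintype.card V) w) :
    ∃ f : V → ℝ × ℝ, IsGridDrawing G f w (Fintype.card V) ∧ IsOrthogonal G f ∧
      IsOrderPreserving G r lab f := by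
  obtain ⟨t, nd, all, hch⟩ := exists_bt hG r lab hlab
  obtain ⟨h, q, -, -, -, D, rfl, o, -, hc⟩ := hw t nd.size_le
  obtain ⟨X, Y, g⟩ := D.exists_agr nd
  obtain ⟨y, y1, y2, y3⟩ := exists_rank Y
  let f : V → ℝ × ℝ := fun v => (((X v + w + 1 : ℤ) : ℝ), ((y v : ℤ) : ℝ))
  have mX : ∀ u v, X u < X v → (f u).1 < (f v).1 := fun u v h =>
    Int.cast_lt.2 (by omega)
  have mY : ∀ u v, Y u < Y v → (f u).2 < (f v).2 := fun u v h =>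
    Int.cast_lt.2 (y1 u v h)
  have eX : ∀ u v, X u = X v → (f u).1 = (f v).1 := fun u v h => by simp only [f, h]
  have eY : ∀ u v, Y u = Y v → (f u).2 = (f v).2 := fun u v h => by simp only [f, y2 u v h]
  have point : ∀ {u zx zy : _}, Box (X u) (Y u) (X u) (Y u) zx zy → zx = X u ∧ zy = Y u := by
    intro u zx zy h
    simp only [Box] at h
    omega
  obtain ⟨d1, d2, d3⟩ := drawing_of_data hG r lab f
    (fun u v h => by
      obtain ⟨δ, hδ⟩ := DT.at_of_child g o (hch u v h)
      exact ⟨δ, hδ.map mX mY eX eY⟩)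
    (fun u v h => Sep.map mX mY (sep_of_disjoint fun zx zy h1 h2 =>
      h (DT.inj_of_ok g o (all u) (all v) ((point h1).1.symm.trans (point h2).1)
        ((point h1).2.symm.trans (point h2).2))))
    (fun u v s h h1 h2 => Sep.map mX mY (sep_of_disjoint fun zx zy h3 h4 => by
      obtain ⟨rfl, rfl⟩ := point h4
      exact DT.vertex_off_edge g o (hch u v h) (all s) h1 h2 h3))
    (fun u v u' v' h h' n1 n2 n3 n4 => Sep.map mX mY (sep_of_disjoint fun zx zy h3 =>
      DT.edge_off_edge g o (hch u v h) (hch u' v' h') n1 n2 n3 n4 h3))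
    (fun p v l rc h1 h2 h3 h4 h5 => by
      have c2 := hch v l h2
      have c4 := hch v rc h4
      rw [h3] at c2
      rw [h5] at c4
      obtain ⟨e, dl, dr, a1, a2, a3, a4⟩ := DT.order_of_ok g nd o (hch p v h1) c2 c4
      exact ⟨e, dl, dr, a1, a2.map mX mY eX eY, a3.map mX mY eX eY, a4.map mX mY eX eY⟩)
  refine ⟨f, ⟨d1, fun v => ⟨X v + w + 1, y v, ?_, ?_, (y3 v).1, (y3 v).2, rfl⟩⟩, d2, d3⟩ <;>
  · have := hc _ _ (DT.cov_of_mem g (all v))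
    omega

end TreeDraw

/-- Every ordered binary tree of size `n ≥ 2` has a straight-line orthogonal
order-preserving grid drawing of area `O(n·2^{√(2 log n)}·√(log n))`. -/
theorem stmt15 : ∃ C : ℝ, 0 < C ∧
    ∀ (n : ℕ), 2 ≤ n →
    ∀ (V : Type) [Fintype V] (G : SimpleGraph V), G.IsTree → Fintype.card V = n →
    ∀ (r : V) (lab : V → Bool),
    (∀ u v w : V, IsParent G r u v → IsParent G r u w → lab v = lab w → v = w) →
    ∃ (W H : ℕ) (f : V → ℝ × ℝ), IsGridDrawing G f W H ∧ IsOrthogonal G f ∧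
      IsOrderPreserving G r lab f ∧
      (W : ℝ) * H ≤ C * n * (2 : ℝ) ^ Real.sqrt (2 * Real.logb 2 n) *
        Real.sqrt (Real.logb 2 n) := by
  refine ⟨20, by norm_num, fun n hn V _ G hG hV r lab hlab => ?_⟩
  obtain ⟨w, hw, hb⟩ := TreeDraw.exists_width V n hn
  rw [← hV] at hw
  obtain ⟨f, h1, h2, h3⟩ := TreeDraw.exists_drawing hG r lab hlab hw
  refine ⟨w, Fintype.card V, f, h1, h2, h3, ?_⟩
  rw [hV]
  calc (w : ℝ) * n ≤ (20 * (2 : ℝ) ^ Real.sqrt (2 * Real.logb 2 n) *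
        Real.sqrt (Real.logb 2 n)) * n := by gcongr
    _ = _ := by ring
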